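/- Let N = (P,T,F,Var) be a UDPN, X ∈ {ℚ, ℚ⁺}, and σ = σ_1⋯σ_l an X-run with intermediate markings i = m_0 →σ_1 m_1 →σ_2 ⋯ →σ_l m_l = f, such that |dval(σ)| > |dval(i) ∪ dval(f)| + 1 + maxvars(N). Let α ∈ dval(σ) \ (dval(i) ∪ dval(f)), E = dval(σ) \ (dval(i) ∪ dval(f) ∪ {α}), and let m_0' = i, m_1', …, m_l' be the ℚ-markings defined by m_{j+1}' = m_j' + Δ(U(E, R(α,E,σ_{j+1}))). Then for all 0 ≤ j ≤ l: (1) m_j'(•,α) = 0; (2) m_j'(•,γ) = m_j(•,γ) for every γ ∈ dval(i) ∪ dval(f); and (3) m_j'(•,γ) = (1/|E|)·Σ_{δ ∈ E∪{α}} m_j(•,δ) for every γ ∈ E. -/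

import Mathlib

open Finset

noncomputable section
open scoped Classical

/-- An unordered data Petri net over places `P`, transitions `T`, variables `V`,
with countably infinite data domain `D = ℕ`.
`pre p t` is the function `F(p,t) : V → ℕ` and `post t p` is `F(t,p) : V → ℕ`. -/
structure UDPN (P T V : Type) where
  pre : P → T → V → ℕ
  post : T → P → V → ℕ

/-- An X-step `(c, t, π)`: coefficient, transition and mode. -/
structure Step (T V : Type) where
  c : ℚ
  t : T
  π : V → ℕ

variable {P T V : Type} [Fintype P] [Fintype T] [Fintype V]

/-- The `P × V` rational matrix `F(•,t)`. -/
def preMat (N : UDPN P T V) (t : T) (p : P) (x : V) : ℚ := (N.pre p t x : ℚ)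

/-- The displacement `Δ(t) = F(t,•) − F(•,t)` as a `P × V` rational matrix. -/
def delta (N : UDPN P T V) (t : T) (p : P) (x : V) : ℚ :=
  (N.post t p x : ℚ) - (N.pre p t x : ℚ)

/-- `A ∘ π⁻¹`: the `P × ℕ` matrix with `(A∘π⁻¹)(p,α) = A(p,x)` if `α = π x`,
and `0` if `α` is outside the range of `π`. (For injective `π` the sum has at
most one nonzero summand.) -/
def compInv (A : P → V → ℚ) (π : V → ℕ) (p : P) (α : ℕ) : ℚ :=
  ∑ x : V, if π x = α then A p x else 0

/-- Only finitely many nonzero columns. -/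
def FinCols (m : P → ℕ → ℚ) : Prop := {α : ℕ | ∃ p, m p α ≠ 0}.Finite

/-- `IsMarking pos m`: `m` is an X-marking; `pos = true` corresponds to `X = ℚ⁺`
(all entries nonnegative), `pos = false` to `X = ℚ`. -/
def IsMarking (pos : Bool) (m : P → ℕ → ℚ) : Prop :=
  FinCols m ∧ (pos = true → ∀ p α, 0 ≤ m p α)

/-- Data values of a marking. -/
def dvalM (m : P → ℕ → ℚ) : Set ℕ := {α | ∃ p, m p α ≠ 0}

/-- A valid X-step: nonnegative coefficient and injective mode.  -/
def IsStep (s : Step T V) : Prop := 0 ≤ s.c ∧ Function.Injective s.π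

/-- A valid X-run: a finite sequence of X-steps. -/
def IsRun (ρ : List (Step T V)) : Prop := ∀ s ∈ ρ, IsStep s

/-- The effect `c · (Δ(t) ∘ π⁻¹)` of a step. -/
def stepEffect (N : UDPN P T V) (s : Step T V) (p : P) (α : ℕ) : ℚ :=
  s.c * compInv (delta N s.t) s.π p α

/-- The effect `Δ(ρ)` of a run. -/
def runEffect (N : UDPN P T V) (ρ : List (Step T V)) (p : P) (α : ℕ) : ℚ :=
  (ρ.map fun s => stepEffect N s p α).sum

/-- A step `(c,t,π)` is fireable at `m` if `m − c·(F(•,t)∘π⁻¹)` is again an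
X-marking: finitely many nonzero columns and (when `pos`) nonnegative entries. -/
def stepFireable (pos : Bool) (N : UDPN P T V) (m : P → ℕ → ℚ) (s : Step T V) : Prop :=
  FinCols (fun p α => m p α - s.c * compInv (preMat N s.t) s.π p α) ∧
  (pos = true → ∀ p α, 0 ≤ m p α - s.c * compInv (preMat N s.t) s.π p α)

/-- A run is fireable at `m` if each step is fireable at the corresponding
intermediate marking. -/
def runFireable (pos : Bool) (N : UDPN P T V) : (P → ℕ → ℚ) → List (Step T V) → Prop
  | _, [] => True
  | m, s :: ρ => stepFireable pos N m s ∧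
      runFireable pos N (fun p α => m p α + stepEffect N s p α) ρ

/-- `m →ρ_X m'` : `ρ` is fireable at `m` and `m' = m + Δ(ρ)`. -/
def Reaches (pos : Bool) (N : UDPN P T V) (i : P → ℕ → ℚ) (ρ : List (Step T V))
    (f : P → ℕ → ℚ) : Prop :=
  runFireable pos N i ρ ∧ f = fun p α => i p α + runEffect N ρ p α

/-- `f` is X-reachable from `i`. -/
def Reach (pos : Bool) (N : UDPN P T V) (i f : P → ℕ → ℚ) : Prop :=
  ∃ ρ, IsRun ρ ∧ Reaches pos N i ρ f

/-- `vars(t)`. -/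
def varsOf (N : UDPN P T V) (t : T) : Set V :=
  {x | ∃ p, N.pre p t x ≠ 0 ∨ N.post t p x ≠ 0}

/-- `maxvars(N) = max_{t ∈ T} |vars(t)|` (0 if `T` is empty). -/
def maxvars (N : UDPN P T V) : ℕ :=
  Finset.univ.sup fun t : T => (varsOf N t).ncard

/-- `dval(ρ)`: the data values used by a run. -/
def runDval (N : UDPN P T V) (ρ : List (Step T V)) : Set ℕ :=
  {α | ∃ s ∈ ρ, ∃ x ∈ varsOf N s.t, s.π x = α}
/-- For `α ∈ E`: the least element of `{β ∈ E | β > α}` if nonempty, else `min E`. -/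
def nextE (E : Finset ℕ) (α : ℕ) : ℕ :=
  if h : (E.filter fun β => α < β).Nonempty then (E.filter fun β => α < β).min' h
  else if h' : E.Nonempty then E.min' h' else 0

/-- The inverse of `nextE` on `E`: the greatest element of `{γ ∈ E | γ < β}` if
nonempty, else `max E`. -/
def prevE (E : Finset ℕ) (β : ℕ) : ℕ :=
  if h : (E.filter fun γ => γ < β).Nonempty then (E.filter fun γ => γ < β).max' h
  else if h' : E.Nonempty then E.max' h' else 0

/-- The mode `π'` of `rot(E,ω)`, characterized by: the permutation matrix `P'` of
`π'` satisfies `P'(•,α) = P(•,α)` for `α ∉ E` and `P'(•,α) = P(•, nextE α)` for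
`α ∈ E` (i.e. `π' x = α ↔ π x = nextE α` for `α ∈ E`). -/
def rotMode {V : Type} (E : Finset ℕ) (π : V → ℕ) (x : V) : ℕ :=
  if π x ∈ E then prevE E (π x) else π x

/-- `rot(E,ω)`. -/
def rotStep (E : Finset ℕ) (s : Step T V) : Step T V := ⟨s.c, s.t, rotMode E s.π⟩

/-- The uniformization `U(E,ω)`: the concatenation
`rot^0(E, ω/|E|) ⋯ rot^{|E|−1}(E, ω/|E|)`. -/
def uniformize (E : Finset ℕ) (s : Step T V) : List (Step T V) :=
  (List.range E.card).map fun k => (rotStep E)^[k] ⟨s.c / (E.card : ℚ), s.t, s.π⟩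

/-- Column `α` of `Δ(t)·P_π` is zero. -/
def zeroCol (N : UDPN P T V) (s : Step T V) (α : ℕ) : Prop :=
  ∀ p, compInv (delta N s.t) s.π p α = 0

/-- The transposition of the data values `α` and `β`. -/
def swapVal (α β γ : ℕ) : ℕ := if γ = α then β else if γ = β then α else γ

/-- `R(α,E,ω)`: if column `α` of `Δ(t)·P_π` is zero then `ω` itself; otherwise the
step whose permutation matrix is obtained from `P_π` by exchanging columns `α` and
`β`, where `β` is the least datum in `E` whose column of `Δ(t)·P_π` is zero. -/
def replaceStep (N : UDPN P T V) (α : ℕ) (E : Finset ℕ) (s : Step T V) : Step T V :=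
  if zeroCol N s α then s
  else if h : (E.filter fun β => zeroCol N s β).Nonempty then
    ⟨s.c, s.t, fun x => swapVal α ((E.filter fun β => zeroCol N s β).min' h) (s.π x)⟩
  else s

/-- `dec(E,α,σ)`: the concatenation `U(E,R(α,E,σ(1))) ⋯ U(E,R(α,E,σ(n)))`. -/
def decRun (N : UDPN P T V) (α : ℕ) (E : Finset ℕ) (σ : List (Step T V)) :
    List (Step T V) :=
  σ.flatMap fun s => uniformize E (replaceStep N α E s)

/-- A histogram of order `q`: a `V × ℕ` matrix with nonnegative rational entries
and finitely many nonzero columns, every row summing to `q` and every column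
summing to at most `q`. -/
def IsHistogram (H : V → ℕ → ℚ) (q : ℚ) : Prop :=
  0 ≤ q ∧ (∀ x α, 0 ≤ H x α) ∧ ({α | ∃ x, H x α ≠ 0}).Finite ∧
  (∀ x, ∑ᶠ α, H x α = q) ∧ (∀ α, ∑ x : V, H x α ≤ q)

/-- `col(H)`: the nonzero columns of `H`. -/
def colH (H : V → ℕ → ℚ) : Set ℕ := {α | ∃ x, H x α ≠ 0}

/-- The permutation matrix `P_π` of a mode `π`. -/
def permMat {V : Type} (π : V → ℕ) (x : V) (α : ℕ) : ℚ := if π x = α then 1 else 0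

/-- `Pre(ρ)`: pairs `(p,α)` of tokens consumed by the run `ρ`. -/
def preSet (N : UDPN P T V) (ρ : List (Step T V)) : Set (P × ℕ) :=
  {pa | ∃ s ∈ ρ, ∃ x, 0 < N.pre pa.1 s.t x ∧ s.π x = pa.2}

/-- `Post(ρ)`: pairs `(p,α)` of tokens produced by the run `ρ`. -/
def postSet (N : UDPN P T V) (ρ : List (Step T V)) : Set (P × ℕ) :=
  {pa | ∃ s ∈ ρ, ∃ x, 0 < N.post s.t pa.1 x ∧ s.π x = pa.2}

/-- A loop-less UDPN: `PrePlace(t) ∩ PostPlace(t) = ∅` for every transition. -/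
def IsLoopless (N : UDPN P T V) : Prop :=
  ∀ t : T, ¬ ∃ p : P, (∃ x, 0 < N.pre p t x) ∧ (∃ x, 0 < N.post t p x)

/-!
Both transformations relabel the data values of a step by a permutation `τ` of `ℕ`, and relabelling
by `τ` composes the effect of the step with `τ⁻¹`. Replacing is relabelling by the transposition of
`α` with an unaffected datum of `E`: it empties column `α` and keeps the sum over `E ∪ {α}`. Such a
datum exists because `|E| > maxvars(N)`. Uniformizing averages the relabellings by the powers of a
cyclic permutation of `E`: it keeps the columns outside `E` and replaces those in `E` by their mean.
-/

section DataSets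

variable {ι : Type*} {D S : Set ι} {α : ι} {E : Finset ι} (hE : (E : Set ι) = D \ (S ∪ {α}))

include hE

theorem notMem_of_coe_eq_sdiff : α ∉ E := by
  rw [← mem_coe, hE]
  exact fun h => h.2 (Or.inr rfl)

theorem disjoint_coe_insert_of_coe_eq_sdiff [DecidableEq ι] (hα : α ∉ S) :
    Disjoint S ↑(insert α E) := by
  rw [coe_insert, Set.disjoint_insert_right, hE]
  exact ⟨hα, Set.disjoint_sdiff_right.mono_left Set.subset_union_left⟩

theorem lt_card_of_coe_eq_sdiff (hS : S.Finite) {n : ℕ} (hn : S.ncard + 1 + n < D.ncard) :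
    n < #E := by
  have hdiff := Set.ncard_le_ncard_sdiff_add_ncard D (S ∪ {α}) (hS.union (Set.finite_singleton α))
  have hunion := Set.ncard_union_le S {α}
  rw [← hE, Set.ncard_coe_finset] at hdiff
  rw [Set.ncard_singleton] at hunion
  lia

end DataSets

section CyclicPermutation

theorem sum_range_pow_apply_of_isCycleOn {ι M : Type*} [AddCommMonoid M] {τ : Equiv.Perm ι}
    {s : Finset ι} (hτ : τ.IsCycleOn s) {a : ι} (ha : a ∈ s) (g : ι → M) :
    ∑ k ∈ range #s, g ((τ ^ k) a) = ∑ b ∈ s, g b := by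
  refine sum_nbij (fun k => (τ ^ k) a) (fun k _ => ?_) (fun k hk l hl hkl => ?_) (fun b hb => ?_)
    fun _ _ => rfl
  · exact hτ.1.mapsTo.perm_pow k ha
  · exact ((hτ.pow_apply_eq_pow_apply ha).1 hkl).eq_of_lt_of_lt (mem_range.1 hk) (mem_range.1 hl)
  · obtain ⟨k, hk, rfl⟩ := hτ.exists_pow_eq ha hb
    exact ⟨k, mem_coe.2 (mem_range.2 hk), rfl⟩

/-- The cyclic successor of the paper as a permutation of all data values: it is `next_E` on `E` and
fixes every datum outside `E`. -/
def nextPerm (E : Finset ℕ) : Equiv.Perm ℕ := E.sort.formPerm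

theorem isCycleOn_nextPerm (E : Finset ℕ) : (nextPerm E).IsCycleOn E := by
  simpa [nextPerm] using E.sortedLT_sort.nodup.isCycleOn_formPerm

theorem nextPerm_apply_of_notMem {E : Finset ℕ} {γ : ℕ} (hγ : γ ∉ E) : nextPerm E γ = γ :=
  List.formPerm_apply_of_notMem (mt (mem_sort _).1 hγ)

theorem nextPerm_pow_apply_of_notMem {E : Finset ℕ} {γ : ℕ} (hγ : γ ∉ E) (k : ℕ) :
    (nextPerm E ^ k) γ = γ := by
  rw [← Equiv.Perm.iterate_eq_pow]
  exact Function.iterate_fixed (nextPerm_apply_of_notMem hγ) k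

theorem prevE_eq_of_isGreatest_filter_lt {E : Finset ℕ} {β δ : ℕ}
    (hδ : IsGreatest (E.filter (· < β) : Set ℕ) δ) : prevE E β = δ := by
  have hne : (E.filter (· < β)).Nonempty := ⟨δ, hδ.1⟩
  rw [prevE, dif_pos hne]
  exact (isGreatest_max' _ hne).unique hδ

theorem prevE_eq_of_isLeast_of_isGreatest {E : Finset ℕ} {β δ : ℕ} (hβ : IsLeast (E : Set ℕ) β)
    (hδ : IsGreatest (E : Set ℕ) δ) : prevE E β = δ := by
  have hempty : ¬ (E.filter (· < β)).Nonempty := by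
    rintro ⟨γ, hγ⟩
    exact (hβ.2 (mem_filter.1 hγ).1).not_gt (mem_filter.1 hγ).2
  rw [prevE, dif_neg hempty, dif_pos ⟨β, hβ.1⟩]
  exact (isGreatest_max' _ _).unique hδ

theorem prevE_nextPerm {E : Finset ℕ} {γ : ℕ} (hγ : γ ∈ E) : prevE E (nextPerm E γ) = γ := by
  have hsorted := E.sortedLT_sort
  have hget : ∀ {k : ℕ} (hk : k < E.sort.length), E.sort[k] ∈ E :=
    fun hk => (mem_sort _).1 (List.getElem_mem hk)
  have hidx {δ : ℕ} (hδ : δ ∈ E) : ∃ k, ∃ hk : k < E.sort.length, E.sort[k] = δ :=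
    List.getElem_of_mem ((mem_sort _).2 hδ)
  obtain ⟨i, hi, rfl⟩ := hidx hγ
  rw [nextPerm, List.formPerm_apply_getElem _ hsorted.nodup]
  obtain hsucc | hlast : i + 1 < E.sort.length ∨ i + 1 = E.sort.length := by lia
  · simp only [Nat.mod_eq_of_lt hsucc]
    refine prevE_eq_of_isGreatest_filter_lt ⟨?_, fun δ hδ => ?_⟩
    · exact mem_coe.2 (mem_filter.2 ⟨hget hi, hsorted.getElem_lt_getElem_iff.2 i.lt_succ_self⟩)
    · obtain ⟨hδE, hδlt⟩ := mem_filter.1 hδ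
      obtain ⟨k, hk, rfl⟩ := hidx hδE
      have hki : k < i + 1 := hsorted.getElem_lt_getElem_iff.1 hδlt
      exact hsorted.getElem_le_getElem_iff.2 (Nat.lt_succ_iff.1 hki)
  · simp only [hlast, Nat.mod_self]
    refine prevE_eq_of_isLeast_of_isGreatest ⟨hget _, fun δ hδ => ?_⟩ ⟨hget _, fun δ hδ => ?_⟩
    all_goals
      obtain ⟨k, hk, rfl⟩ := hidx hδ
      exact hsorted.getElem_le_getElem_iff.2 (by lia)

theorem nextPerm_symm_apply_of_mem {E : Finset ℕ} {γ : ℕ} (hγ : γ ∈ E) :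
    (nextPerm E).symm γ = prevE E γ := by
  have hmem : (nextPerm E).symm γ ∈ E := (isCycleOn_nextPerm E).inv.apply_mem_iff.2 hγ
  simpa using (prevE_nextPerm hmem).symm

theorem rotMode_eq_nextPerm_symm_comp {V : Type} (E : Finset ℕ) (π : V → ℕ) :
    rotMode E π = (nextPerm E).symm ∘ π := by
  funext x
  by_cases hx : π x ∈ E
  · simp [rotMode, hx, nextPerm_symm_apply_of_mem hx]
  · simp [rotMode, hx, Equiv.eq_symm_apply, nextPerm_apply_of_notMem hx]

end CyclicPermutation

section Effect

omit [Fintype P] [Fintype T]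

/-- The step `(c, t, τ ∘ π)` obtained from `(c, t, π)` by renaming the data values along `τ`. -/
def Step.relabel (τ : Equiv.Perm ℕ) (s : Step T V) : Step T V := ⟨s.c, s.t, τ ∘ s.π⟩

theorem stepEffect_relabel (N : UDPN P T V) (τ : Equiv.Perm ℕ) (s : Step T V) (p : P) (γ : ℕ) :
    stepEffect N (s.relabel τ) p γ = stepEffect N s p (τ.symm γ) := by
  simp only [stepEffect, compInv, Step.relabel, Function.comp_apply, ← Equiv.eq_symm_apply]

omit [Fintype V] in
theorem iterate_rotStep (E : Finset ℕ) (k : ℕ) (s : Step T V) :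
    (rotStep E)^[k] s = s.relabel (nextPerm E ^ k).symm := by
  induction k with
  | zero => rfl
  | succ k ih =>
    rw [Function.iterate_succ_apply', ih, rotStep, rotMode_eq_nextPerm_symm_comp, pow_succ]
    rfl

theorem runEffect_uniformize (N : UDPN P T V) (E : Finset ℕ) (s : Step T V) (p : P) (γ : ℕ) :
    runEffect N (uniformize E s) p γ =
      (∑ k ∈ range #E, stepEffect N s p ((nextPerm E ^ k) γ)) / #E := by
  have hscale (δ : ℕ) :
      stepEffect N ⟨s.c / #E, s.t, s.π⟩ p δ = stepEffect N s p δ / #E := div_mul_eq_mul_div _ _ _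
  simp only [runEffect, uniformize, iterate_rotStep, List.map_map, Function.comp_def,
    stepEffect_relabel, Equiv.symm_symm, hscale, sum_div]
  rfl

theorem runEffect_uniformize_of_notMem (N : UDPN P T V) {E : Finset ℕ} (hE : E.Nonempty)
    (s : Step T V) (p : P) {γ : ℕ} (hγ : γ ∉ E) :
    runEffect N (uniformize E s) p γ = stepEffect N s p γ := by
  simp [runEffect_uniformize, nextPerm_pow_apply_of_notMem hγ, hE.ne_empty]

theorem runEffect_uniformize_of_mem (N : UDPN P T V) {E : Finset ℕ} (s : Step T V) (p : P) {γ : ℕ}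
    (hγ : γ ∈ E) : runEffect N (uniformize E s) p γ = (∑ δ ∈ E, stepEffect N s p δ) / #E := by
  rw [runEffect_uniformize, sum_range_pow_apply_of_isCycleOn (isCycleOn_nextPerm E) hγ]

theorem sum_runEffect (N : UDPN P T V) (S : Finset ℕ) (ρ : List (Step T V)) (p : P) :
    ∑ δ ∈ S, runEffect N ρ p δ = (ρ.map fun s => ∑ δ ∈ S, stepEffect N s p δ).sum := by
  induction ρ with
  | nil => simp [runEffect]
  | cons s ρ ih => simpa [runEffect, sum_add_distrib] using ih

theorem runEffect_decRun (N : UDPN P T V) (α : ℕ) (E : Finset ℕ) (ρ : List (Step T V)) (p : P)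
    (γ : ℕ) : runEffect N (decRun N α E ρ) p γ =
      (ρ.map fun s => runEffect N (uniformize E (replaceStep N α E s)) p γ).sum := by
  induction ρ with
  | nil => rfl
  | cons s ρ ih => simpa [runEffect, decRun] using ih

theorem zeroCol_of_notMem_image_varsOf (N : UDPN P T V) (s : Step T V) {β : ℕ}
    (hβ : β ∉ s.π '' varsOf N s.t) : zeroCol N s β := by
  refine fun p => sum_eq_zero fun x _ => ite_eq_right_iff.2 fun hx => ?_
  have hvar : x ∉ varsOf N s.t := fun h => hβ ⟨x, h, hx⟩
  simp only [varsOf, Set.mem_ofPred_eq, not_exists, not_or, not_not] at hvar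
  simp [delta, hvar p]

end Effect

section Replacement

omit [Fintype P]

variable (N : UDPN P T V) {E : Finset ℕ} (hE : maxvars N < #E)

omit [Fintype V] in
theorem ncard_varsOf_le_maxvars (t : T) : (varsOf N t).ncard ≤ maxvars N :=
  le_sup (f := fun t => (varsOf N t).ncard) (mem_univ t)

include hE

theorem exists_mem_zeroCol (s : Step T V) : ∃ β ∈ E, zeroCol N s β := by
  have hcard : (s.π '' varsOf N s.t).ncard < (E : Set ℕ).ncard := by
    rw [Set.ncard_coe_finset]
    exact ((Set.ncard_image_le (Set.toFinite _)).trans (ncard_varsOf_le_maxvars N s.t)).trans_lt hE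
  obtain ⟨β, hβE, hβ⟩ := Set.exists_mem_notMem_of_ncard_lt_ncard hcard
  exact ⟨β, hβE, zeroCol_of_notMem_image_varsOf N s hβ⟩

theorem exists_replaceStep_eq_relabel_swap (α : ℕ) (s : Step T V) :
    ∃ β ∈ insert α E, zeroCol N s β ∧ replaceStep N α E s = s.relabel (Equiv.swap α β) := by
  by_cases hα : zeroCol N s α
  · exact ⟨α, mem_insert_self α E, hα, by simp [replaceStep, hα, Step.relabel]⟩
  · have hne : (E.filter fun β => zeroCol N s β).Nonempty :=
      filter_nonempty_iff.2 (exists_mem_zeroCol N hE s)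
    obtain ⟨hβE, hβ⟩ := mem_filter.1 (min'_mem _ hne)
    refine ⟨_, mem_insert_of_mem hβE, hβ, ?_⟩
    simp [replaceStep, hα, hne, Step.relabel, Function.comp_def, swapVal, Equiv.swap_apply_def]

theorem stepEffect_replaceStep_self (α : ℕ) (s : Step T V) (p : P) :
    stepEffect N (replaceStep N α E s) p α = 0 := by
  obtain ⟨β, -, hzero, hswap⟩ := exists_replaceStep_eq_relabel_swap N hE α s
  rw [hswap, stepEffect_relabel, Equiv.symm_swap, Equiv.swap_apply_left, stepEffect, hzero,
    mul_zero]

theorem stepEffect_replaceStep_of_notMem {α : ℕ} (s : Step T V) (p : P) {γ : ℕ}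
    (hγ : γ ∉ insert α E) : stepEffect N (replaceStep N α E s) p γ = stepEffect N s p γ := by
  obtain ⟨β, hβ, -, hswap⟩ := exists_replaceStep_eq_relabel_swap N hE α s
  have hγα : γ ≠ α := fun h => hγ (h ▸ mem_insert_self α E)
  have hγβ : γ ≠ β := fun h => hγ (h ▸ hβ)
  rw [hswap, stepEffect_relabel, Equiv.symm_swap, Equiv.swap_apply_of_ne_of_ne hγα hγβ]

theorem sum_stepEffect_replaceStep {α : ℕ} (hα : α ∉ E) (s : Step T V) (p : P) :
    ∑ δ ∈ E, stepEffect N (replaceStep N α E s) p δ = ∑ δ ∈ insert α E, stepEffect N s p δ := by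
  obtain ⟨β, hβ, -, hswap⟩ := exists_replaceStep_eq_relabel_swap N hE α s
  calc ∑ δ ∈ E, stepEffect N (replaceStep N α E s) p δ
      = ∑ δ ∈ insert α E, stepEffect N (replaceStep N α E s) p δ := by
        rw [sum_insert hα, stepEffect_replaceStep_self N hE, zero_add]
    _ = ∑ δ ∈ insert α E, stepEffect N s p (Equiv.swap α β δ) := by
        simp only [hswap, stepEffect_relabel, Equiv.symm_swap]
    _ = ∑ δ ∈ insert α E, stepEffect N s p δ := by
        refine (Equiv.swap α β).sum_comp _ _ fun δ hδ => ?_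
        obtain rfl | rfl := Equiv.eq_or_eq_of_swap_apply_ne_self hδ
        exacts [mem_insert_self _ _, hβ]

theorem runEffect_decRun_self {α : ℕ} (hα : α ∉ E) (ρ : List (Step T V)) (p : P) :
    runEffect N (decRun N α E ρ) p α = 0 := by
  have hne : E.Nonempty := card_pos.1 (Nat.zero_lt_of_lt hE)
  simp [runEffect_decRun, runEffect_uniformize_of_notMem N hne _ p hα,
    stepEffect_replaceStep_self N hE]

theorem runEffect_decRun_of_notMem {α : ℕ} (ρ : List (Step T V)) (p : P) {γ : ℕ}
    (hγ : γ ∉ insert α E) : runEffect N (decRun N α E ρ) p γ = runEffect N ρ p γ := by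
  have hne : E.Nonempty := card_pos.1 (Nat.zero_lt_of_lt hE)
  have hγE : γ ∉ E := mt mem_insert_of_mem hγ
  simp only [runEffect_decRun, runEffect_uniformize_of_notMem N hne _ p hγE,
    stepEffect_replaceStep_of_notMem N hE _ p hγ]
  rfl

theorem runEffect_decRun_of_mem {α : ℕ} (hα : α ∉ E) (ρ : List (Step T V)) (p : P) {γ : ℕ}
    (hγ : γ ∈ E) :
    runEffect N (decRun N α E ρ) p γ = (∑ δ ∈ insert α E, runEffect N ρ p δ) / #E := by
  simp only [runEffect_decRun, runEffect_uniformize_of_mem N _ p hγ,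
    sum_stepEffect_replaceStep N hE hα, sum_runEffect, div_eq_mul_inv, List.sum_map_mul_right]

theorem dec_run_intermediate_general {i : P → ℕ → ℚ} {α : ℕ} (hα : α ∉ E)
    (hi : Disjoint (dvalM i) ↑(insert α E)) (ρ : List (Step T V)) :
    (∀ p : P, i p α + runEffect N (decRun N α E ρ) p α = 0) ∧
    (∀ γ ∉ insert α E, ∀ p : P,
      i p γ + runEffect N (decRun N α E ρ) p γ = i p γ + runEffect N ρ p γ) ∧
    (∀ γ ∈ E, ∀ p : P,
      i p γ + runEffect N (decRun N α E ρ) p γ =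
        (∑ δ ∈ insert α E, (i p δ + runEffect N ρ p δ)) / (#E : ℚ)) := by
  have hzero {δ : ℕ} (hδ : δ ∈ insert α E) (p : P) : i p δ = 0 :=
    of_not_not fun h => hi.notMem_of_mem_right hδ ⟨p, h⟩
  refine ⟨fun p => ?_, fun γ hγ p => ?_, fun γ hγ p => ?_⟩
  · rw [hzero (mem_insert_self α E), runEffect_decRun_self N hE hα, add_zero]
  · rw [runEffect_decRun_of_notMem N hE ρ p hγ]
  · rw [hzero (mem_insert_of_mem hγ), runEffect_decRun_of_mem N hE hα ρ p hγ, zero_add,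
      sum_add_distrib, sum_eq_zero fun δ hδ => hzero hδ p, zero_add]

end Replacement

/-- The three invariants of the intermediate markings of the
decrease transformation, where `m_j = i + Δ(σ(1)⋯σ(j))` and
`m_j' = i + Δ(dec(E,α,σ(1)⋯σ(j)))` (`pos = true` corresponds to `X = ℚ⁺`,
`pos = false` to `X = ℚ`). -/
theorem dec_run_intermediate (pos : Bool)
    (N : UDPN P T V) (i f : P → ℕ → ℚ)
    (hi : IsMarking pos i) (hf : IsMarking pos f)
    (σ : List (Step T V)) (hσ : IsRun σ) (hσr : Reaches pos N i σ f)
    (hbig : (dvalM i ∪ dvalM f).ncard + 1 + maxvars N < (runDval N σ).ncard)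
    (α : ℕ) (hα : α ∈ runDval N σ \ (dvalM i ∪ dvalM f))
    (E : Finset ℕ)
    (hE : (↑E : Set ℕ) = runDval N σ \ (dvalM i ∪ dvalM f ∪ {α})) :
    ∀ j ≤ σ.length,
      (∀ p : P, i p α + runEffect N (decRun N α E (σ.take j)) p α = 0) ∧
      (∀ γ ∈ dvalM i ∪ dvalM f, ∀ p : P,
        i p γ + runEffect N (decRun N α E (σ.take j)) p γ =
          i p γ + runEffect N (σ.take j) p γ) ∧
      (∀ γ ∈ E, ∀ p : P,
        i p γ + runEffect N (decRun N α E (σ.take j)) p γ =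
          (∑ δ ∈ insert α E, (i p δ + runEffect N (σ.take j) p δ)) / (E.card : ℚ)) := by
  have hdisj := disjoint_coe_insert_of_coe_eq_sdiff hE hα.2
  have hcard := lt_card_of_coe_eq_sdiff hE (hi.1.union hf.1) hbig
  exact fun j _ => (dec_run_intermediate_general N hcard (notMem_of_coe_eq_sdiff hE)
    (hdisj.mono_left Set.subset_union_left) (σ.take j)).imp_right
      (And.imp_left fun hout γ hγ => hout γ (hdisj.notMem_of_mem_left hγ))
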